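/- Let (R, m) be a Noetherian local ring of dimension t and let x = x_1, ..., x_t and y = y_1, ..., y_t be two systems of parameters of R. Then the topologies on R defined by the families of ideals {(x_1^n, ..., x_t^n)^lim}_{n ≥ 1} and {(y_1^n, ..., y_t^n)^lim}_{n ≥ 1} are equivalent; that is, for each n ≥ 1 there exists m ≥ 1 with (y_1^m, ..., y_t^m)^lim ⊆ (x_1^n, ..., x_t^n)^lim, and symmetrically with the roles of x and y exchanged. -/

import Mathlib

/-!
Write `(x)` for the ideal generated by `x₁, …, x_t`. The limit closure of `x` is the annihilator
of the class of `1 / (x₁⋯x_t)` in the top local cohomology module, and this class is a multiple of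
the one attached to `y` whenever `(y) ⊆ (x)`. Hence `(y) ⊆ (x)` together with `x ∈ √(y)` gives
`(y)^lim ⊆ (x)^lim` (`limitClosure_le_limitClosure`). The theorem follows, because a high power of
each `yᵢ` lies in the `m`-primary ideal `(x₁^n, …, x_t^n)`.

The proof of the inclusion is the determinantal form of this argument and avoids local cohomology.
Let `r (y₁⋯y_t)^k ∈ (y₁^{k+1}, …, y_t^{k+1})`, write `y = A x`, and write `x^N = C y^{k+1}` for
some large `N`. Cramer's rule (`det_mul_mem_span_mulVec`) turns the hypothesis into
`det (C · diag(y^k) · A) r ∈ (x₁^N, …, x_t^N)`. Both `C · diag(y^k) · A` and `diag(x^{N-1})` send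
the vector `x` to `x^N`. The determinants of two matrices sending `x` to the same vector `z` agree
modulo `(z₁², …, z_t²)` after multiplication by `z₁⋯z_t` (`det_sub_det_mul_prod_mem`). Therefore
`r (x₁⋯x_t)^{2N-1} ∈ (x₁^{2N}, …, x_t^{2N})`.
-/

open IsLocalRing

/-- The limit closure `(x)^lim = ⋃_{n>0} ((x₁^{n+1}, …, x_r^{n+1}) :_R (x₁⋯x_r)^n)` of a
sequence `x = x₁, …, x_r` of elements of `R`; the union of the increasing family of ideals
is expressed as a supremum. -/
def limitClosure {R : Type*} [CommRing R] {M : Type*} [AddCommGroup M] [Module R M]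
    {r : ℕ} (x : Fin r → R) : Submodule R M :=
  ⨆ n : ℕ, (Ideal.span (Set.range fun i => x i ^ (n + 2)) • (⊤ : Submodule R M)).comap
    (LinearMap.lsmul R M ((∏ i, x i) ^ (n + 1)))

/-- A system of parameters of a Noetherian local ring `R` of dimension `t`: a sequence of `t`
elements of the maximal ideal generating an ideal primary to the maximal ideal. -/
def IsSOP (R : Type*) [CommRing R] [IsLocalRing R] {t : ℕ} (x : Fin t → R) : Prop :=
  (∀ i, x i ∈ maximalIdeal R) ∧ (Ideal.span (Set.range x)).radical = maximalIdeal R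

/-- Cramer's rule: `det C` carries the ideal `(w)` into the ideal `(C w)`. -/
lemma det_mul_mem_span_mulVec {R : Type*} [CommRing R] {t : ℕ}
    (C : Matrix (Fin t) (Fin t) R) (w : Fin t → R) {s : R}
    (hs : s ∈ Ideal.span (Set.range w)) :
    C.det * s ∈ Ideal.span (Set.range (C.mulVec w)) := by
  have key : ∀ j, C.det * w j ∈ Ideal.span (Set.range (C.mulVec w)) := by
    intro j
    have h : C.det * w j = ∑ k, C.adjugate j k * C.mulVec w k := by
      have h1 : C.adjugate.mulVec (C.mulVec w) = C.det • w := by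
        rw [Matrix.mulVec_mulVec, Matrix.adjugate_mul, Matrix.smul_mulVec, Matrix.one_mulVec]
      have h2 := congrFun h1 j
      simp only [Pi.smul_apply, smul_eq_mul] at h2
      rw [← h2]
      rfl
    rw [h]
    exact Ideal.sum_mem _ fun k _ =>
      Ideal.mul_mem_left _ _ (Ideal.subset_span (Set.mem_range_self k))
  obtain ⟨c, rfl⟩ := Ideal.mem_span_range_iff_exists_fun.1 hs
  rw [Finset.mul_sum]
  refine Ideal.sum_mem _ fun j _ => ?_
  rw [mul_left_comm]
  exact Ideal.mul_mem_left _ _ (key j)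

/-- A matrix `D` sending `x` to `z` with its `i`-th entry replaced by `0` satisfies
`det D · zᵢ ∈ (z_k : k ≠ i)` as soon as `zᵢ ∈ (x)`; multiplying by the remaining `z_k` produces
squares. -/
lemma det_mul_prod_mem_of_mulVec_eq_update {R : Type*} [CommRing R] {t : ℕ}
    (D : Matrix (Fin t) (Fin t) R) (x z : Fin t → R) (i : Fin t)
    (hD : D.mulVec x = Function.update z i 0) (hz : z i ∈ Ideal.span (Set.range x)) :
    D.det * ∏ k, z k ∈ Ideal.span (Set.range fun k => z k ^ 2) := by
  have h := det_mul_mem_span_mulVec D x hz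
  rw [hD] at h
  obtain ⟨c, hc⟩ := Ideal.mem_span_range_iff_exists_fun.1 h
  rw [← Finset.mul_prod_erase Finset.univ z (Finset.mem_univ i), ← mul_assoc, ← hc,
    Finset.sum_mul]
  refine Ideal.sum_mem _ fun k _ => ?_
  by_cases hk : k = i
  · subst hk
    simp
  · have hmem : k ∈ Finset.univ.erase i := by simp [hk]
    rw [Function.update_of_ne hk, ← Finset.mul_prod_erase _ z hmem]
    have e : c k * z k * (z k * ∏ a ∈ (Finset.univ.erase i).erase k, z a)
        = (c k * ∏ a ∈ (Finset.univ.erase i).erase k, z a) * z k ^ 2 := by ring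
    rw [e]
    exact Ideal.mul_mem_left _ _ (Ideal.subset_span ⟨k, rfl⟩)

/-- Determinants of two matrices sending `x` to the same vector `z` agree modulo
`(z₁², …, z_t²)` after multiplication by `z₁⋯z_t`. The two matrices are compared one row at a
time; `S` contains the rows in which they may differ. -/
lemma det_sub_det_mul_prod_mem {R : Type*} [CommRing R] {t : ℕ} (x z : Fin t → R)
    (B : Matrix (Fin t) (Fin t) R) (hB : B.mulVec x = z) (S : Finset (Fin t)) :
    ∀ A : Matrix (Fin t) (Fin t) R, A.mulVec x = z → (∀ i, i ∉ S → A i = B i) →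
      (A.det - B.det) * ∏ k, z k ∈ Ideal.span (Set.range fun k => z k ^ 2) := by
  induction S using Finset.induction_on with
  | empty =>
    intro A _ h
    have : A = B := funext fun i => h i (by simp)
    simp [this]
  | insert i S hi ih =>
    intro A hA h
    have hrow : ∀ k, A k ⬝ᵥ x = z k := fun k => congrFun hA k
    have hrowB : ∀ k, B k ⬝ᵥ x = z k := fun k => congrFun hB k
    have h1 : (A.updateRow i (B i)).mulVec x = z := by
      funext k
      change (A.updateRow i (B i)) k ⬝ᵥ x = z k
      by_cases hk : k = i
      · subst hk
        rw [Matrix.updateRow_self, hrowB]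
      · rw [Matrix.updateRow_ne hk, hrow]
    have h2 : (A.updateRow i (A i - B i)).mulVec x = Function.update z i 0 := by
      funext k
      change (A.updateRow i (A i - B i)) k ⬝ᵥ x = _
      by_cases hk : k = i
      · subst hk
        rw [Matrix.updateRow_self, sub_dotProduct, hrowB, hrow]
        simp
      · rw [Matrix.updateRow_ne hk, hrow, Function.update_of_ne hk]
    have hz : z i ∈ Ideal.span (Set.range x) :=
      Ideal.mem_span_range_iff_exists_fun.2 ⟨A i, hrow i⟩
    have m1 := ih (A.updateRow i (B i)) h1 (by
      intro k hk
      by_cases hki : k = i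
      · subst hki
        rw [Matrix.updateRow_self]
      · rw [Matrix.updateRow_ne hki]
        exact h k (by simp [hki, hk]))
    have m2 := det_mul_prod_mem_of_mulVec_eq_update _ x z i h2 hz
    have hdet : A.det = (A.updateRow i (A i - B i)).det + (A.updateRow i (B i)).det := by
      rw [← Matrix.det_updateRow_add, sub_add_cancel, Matrix.updateRow_eq_self]
    have e : (A.det - B.det) * ∏ k, z k = (A.updateRow i (A i - B i)).det * ∏ k, z k +
        ((A.updateRow i (B i)).det - B.det) * ∏ k, z k := by
      rw [hdet]
      ring
    rw [e]
    exact Ideal.add_mem _ m2 m1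

lemma exists_pow_mem_of_mem_radical {R : Type*} [CommRing R] {t : ℕ} (x : Fin t → R)
    (I : Ideal R) (h : ∀ i, x i ∈ I.radical) : ∃ N : ℕ, ∀ i, x i ^ (N + 1) ∈ I := by
  choose n hn using h
  exact ⟨Finset.univ.sup n, fun i => I.pow_mem_of_pow_mem (hn i)
    ((Finset.le_sup (f := n) (Finset.mem_univ i)).trans (Nat.le_succ _))⟩

lemma span_le_radical_span_pow {R : Type*} [CommRing R] {t : ℕ} (y : Fin t → R) (k : ℕ) :
    Ideal.span (Set.range y) ≤ (Ideal.span (Set.range fun i => y i ^ k)).radical := by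
  rw [Ideal.span_le]
  rintro _ ⟨i, rfl⟩
  exact ⟨k, Ideal.subset_span ⟨i, rfl⟩⟩

/-- The limit closure is monotone along `(y) ⊆ (x)`, provided both ideals have the same
radical. -/
lemma limitClosure_le_limitClosure {R : Type*} [CommRing R] {t : ℕ} (x y : Fin t → R)
    (hyx : ∀ i, y i ∈ Ideal.span (Set.range x))
    (hxy : ∀ i, x i ∈ (Ideal.span (Set.range y)).radical) :
    limitClosure (M := R) y ≤ limitClosure (M := R) x := by
  refine iSup_le fun k r hr => ?_
  simp only [Submodule.mem_comap, LinearMap.lsmul_apply, smul_eq_mul, Ideal.mul_top] at hr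
  obtain ⟨N, hN⟩ := exists_pow_mem_of_mem_radical x
    (Ideal.span (Set.range fun i => y i ^ (k + 2))) fun i =>
      Ideal.radical_le_radical_iff.2 (span_le_radical_span_pow y (k + 2)) (hxy i)
  choose A hA using fun i => Ideal.mem_span_range_iff_exists_fun.1 (hyx i)
  choose C hC using fun i => Ideal.mem_span_range_iff_exists_fun.1 (hN i)
  have hA' : (Matrix.of A).mulVec x = y := funext hA
  have hC' : (Matrix.of C).mulVec (fun i => y i ^ (k + 2)) = fun i => x i ^ (N + 1) := funext hC
  have h1 := det_mul_mem_span_mulVec (Matrix.of C) _ hr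
  rw [hC'] at h1
  have hE : (Matrix.of C * Matrix.diagonal (fun i => y i ^ (k + 1)) * Matrix.of A).mulVec x
      = fun i => x i ^ (N + 1) := by
    rw [← Matrix.mulVec_mulVec, hA', ← Matrix.mulVec_mulVec, ← hC']
    congr 1
    funext i
    rw [Matrix.mulVec_diagonal]
    ring
  have hF : (Matrix.diagonal (fun i => x i ^ N)).mulVec x = fun i => x i ^ (N + 1) := by
    funext i
    rw [Matrix.mulVec_diagonal]
    ring
  have h2 := det_sub_det_mul_prod_mem x _ _ hF Finset.univ _ hE (by simp)
  -- Multiplying by `∏ z` moves membership from `(z₁, …, z_t)` to `(z₁², …, z_t²)`.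
  have h3 : ∀ s ∈ Ideal.span (Set.range fun i => x i ^ (N + 1)),
      s * ∏ i, x i ^ (N + 1) ∈ Ideal.span (Set.range fun i => (x i ^ (N + 1)) ^ 2) := by
    intro s hs
    obtain ⟨c, rfl⟩ := Ideal.mem_span_range_iff_exists_fun.1 hs
    rw [Finset.sum_mul]
    refine Ideal.sum_mem _ fun i _ => ?_
    rw [← Finset.mul_prod_erase Finset.univ _ (Finset.mem_univ i), ← mul_assoc,
      mul_assoc (c i), ← sq, mul_right_comm]
    exact Ideal.mul_mem_left _ _ (Ideal.subset_span ⟨i, rfl⟩)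
  have h4 := h3 _ (Ideal.mul_mem_left _ (Matrix.of A).det h1)
  have h5 := Ideal.sub_mem _ h4 (Ideal.mul_mem_left _ r h2)
  refine Submodule.mem_iSup_of_mem (2 * N) ?_
  simp only [Submodule.mem_comap, LinearMap.lsmul_apply, smul_eq_mul, Ideal.mul_top]
  have e2 : (fun i => x i ^ (2 * N + 2)) = fun i => (x i ^ (N + 1)) ^ 2 := by
    funext i
    ring
  rw [e2]
  convert h5 using 1
  simp only [Matrix.det_mul, Matrix.det_diagonal, Finset.prod_pow]
  ring

lemma exists_limitClosure_pow_le {R : Type*} [CommRing R] [IsLocalRing R] {t : ℕ}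
    (x y : Fin t → R) (hx : IsSOP R x) (hy : IsSOP R y) (n : ℕ) :
    ∃ m : ℕ, limitClosure (M := R) (fun i => y i ^ (m + 1)) ≤
      limitClosure (M := R) (fun i => x i ^ (n + 1)) := by
  have hrad : ∀ (u v : Fin t → R), IsSOP R u → IsSOP R v → ∀ (k : ℕ) (i : Fin t),
      u i ∈ (Ideal.span (Set.range fun i => v i ^ k)).radical := by
    intro u v hu hv k i
    refine Ideal.radical_le_radical_iff.2 (span_le_radical_span_pow v k) ?_
    rw [hv.2]
    exact hu.1 i
  obtain ⟨m, hm⟩ := exists_pow_mem_of_mem_radical y _ (hrad y x hy hx (n + 1))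
  exact ⟨m, limitClosure_le_limitClosure _ _ hm fun i =>
    Ideal.pow_mem_of_mem _ (hrad x y hx hy (m + 1) i) _ (Nat.succ_pos n)⟩

/-- For any two systems of parameters `x` and `y` of a Noetherian local ring `R` of
dimension `t`, the topologies defined by `{(x₁^n, …, x_t^n)^lim}_{n ≥ 1}` and
`{(y₁^n, …, y_t^n)^lim}_{n ≥ 1}` are equivalent: each member of one family contains a
member of the other. -/
theorem limitClosure_topologies_equivalent
    {R : Type*} [CommRing R] [IsNoetherianRing R] [IsLocalRing R]
    {t : ℕ} (hdim : ringKrullDim R = t)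
    (x y : Fin t → R) (hx : IsSOP R x) (hy : IsSOP R y) :
    (∀ n : ℕ, ∃ m : ℕ,
      limitClosure (M := R) (fun i => y i ^ (m + 1)) ≤
        limitClosure (M := R) (fun i => x i ^ (n + 1))) ∧
    (∀ n : ℕ, ∃ m : ℕ,
      limitClosure (M := R) (fun i => x i ^ (m + 1)) ≤
        limitClosure (M := R) (fun i => y i ^ (n + 1))) := by
  exact ⟨exists_limitClosure_pow_le x y hx hy, exists_limitClosure_pow_le y x hy hx⟩
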